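/- Under the block setup and outer setup, let ε_1,…,ε_m > 0 and Σ_ε = diag(ε_1 I_{n_1},…,ε_m I_{n_m}). Then the matrix Σ_ε B_D + Q is symmetric positive definite, and the saddle point matrix A_ε = [[A, Bᵀ],[B, −Σ_ε B_D − Q]] ∈ R^{(N+n)×(N+n)} is nonsingular; in particular, for every F ∈ R^{N+n} the linear system A_ε z = F has a unique solution. -/

import Mathlib

/-
Two positive semidefinite matrices whose kernels meet only in `0` have a positive definite sum.
In each block `ker B_s` is spanned by `e_s`, while `Q_s e_s = M_s e_s ≠ 0`, so the kernels of
`ε_s B_s` and `Q_s` meet trivially and `Σ_ε B_D + Q` is positive definite. The Schur complement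
of `A` in `A_ε` is then `-(Σ_ε B_D + Q + B A⁻¹ Bᵀ)`, the negative of a positive definite matrix,
so `A_ε` is invertible.
-/

open Matrix

/-- The all-ones vector `e` in `ℝ^k`. -/
noncomputable def onesV (k : ℕ) : Fin k → ℝ := fun _ => 1

/-- The rank-one block `Q_s = (1/d_s²) (M_s e_s)(M_s e_s)ᵀ`, where `d_s² = e_sᵀ M_s e_s`. -/
noncomputable def Qblk {k : ℕ} (M : Matrix (Fin k) (Fin k) ℝ) : Matrix (Fin k) (Fin k) ℝ :=
  (onesV k ⬝ᵥ M.mulVec (onesV k))⁻¹ • vecMulVec (M.mulVec (onesV k)) (M.mulVec (onesV k))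

open scoped ComplexOrder

section BlockDiagonal

variable {ι R : Type*} {n : ι → Type*} [DecidableEq ι]

theorem blockDiagonal'_mulVec_apply [Fintype ι] [∀ s, Fintype (n s)]
    [NonUnitalNonAssocSemiring R] (S : ∀ s, Matrix (n s) (n s) R) (x : (Σ s, n s) → R)
    (s : ι) (i : n s) :
    (blockDiagonal' S *ᵥ x) ⟨s, i⟩ = (S s *ᵥ fun j => x ⟨s, j⟩) i := by
  simp only [mulVec, dotProduct, Fintype.sum_sigma]
  rw [Fintype.sum_eq_single s]
  · simp only [blockDiagonal'_apply_eq]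
  · intro t hts
    simp only [blockDiagonal'_apply_ne S _ _ hts.symm, zero_mul, Finset.sum_const_zero]

theorem dotProduct_blockDiagonal'_mulVec [Fintype ι] [∀ s, Fintype (n s)]
    [NonUnitalNonAssocSemiring R] (S : ∀ s, Matrix (n s) (n s) R) (x y : (Σ s, n s) → R) :
    y ⬝ᵥ blockDiagonal' S *ᵥ x
      = ∑ s, (fun i => y ⟨s, i⟩) ⬝ᵥ (S s *ᵥ fun i => x ⟨s, i⟩) := by
  simp only [dotProduct, Fintype.sum_sigma, blockDiagonal'_mulVec_apply]

theorem posDef_blockDiagonal' [Finite ι] [∀ s, Finite (n s)] [Ring R] [PartialOrder R]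
    [IsOrderedAddMonoid R] [StarRing R] {S : ∀ s, Matrix (n s) (n s) R} (hS : ∀ s, (S s).PosDef) :
    (blockDiagonal' S).PosDef := by
  have := Fintype.ofFinite ι
  have := fun s => Fintype.ofFinite (n s)
  refine .of_dotProduct_mulVec_pos
    (isHermitian_blockDiagonal'_iff.2 fun s => (hS s).isHermitian) fun x hx => ?_
  obtain ⟨⟨s, i⟩, hxsi⟩ := Function.ne_iff.1 hx
  have hxs : (fun j => x ⟨s, j⟩) ≠ 0 := fun h => hxsi (congrFun h i)
  rw [dotProduct_blockDiagonal'_mulVec]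
  exact Finset.sum_pos' (fun t _ => (hS t).posSemidef.dotProduct_mulVec_nonneg _)
    ⟨s, Finset.mem_univ s, (hS s).dotProduct_mulVec_pos hxs⟩

end BlockDiagonal

theorem isUnit_fromBlocks_neg_of_posDef {K k l : Type*} [Field K] [PartialOrder K] [StarRing K]
    [StarOrderedRing K] [Fintype k] [DecidableEq k] [Fintype l] [DecidableEq l]
    {A : Matrix k k K} {S : Matrix l l K} (hA : A.PosDef) (hS : S.PosDef) (B : Matrix l k K) :
    IsUnit (fromBlocks A Bᴴ B (-S)) := by
  have : Invertible A := hA.isUnit.invertible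
  have hSchur : (S + B * A⁻¹ * Bᴴ).PosDef :=
    hS.add_posSemidef (hA.inv.posSemidef.mul_mul_conjTranspose_same B)
  rw [isUnit_fromBlocks_iff_of_invertible₁₁, invOf_eq_nonsing_inv, ← neg_add']
  exact hSchur.isUnit.neg

theorem existsUnique_mulVec_eq_of_isUnit {R k : Type*} [CommRing R] [Fintype k] [DecidableEq k]
    {A : Matrix k k R} (hA : IsUnit A) (F : k → R) : ∃! z, A *ᵥ z = F :=
  (Function.bijective_iff_existsUnique A.mulVec).1
    ⟨mulVec_injective_of_isUnit hA, mulVec_surjective_iff_isUnit.2 hA⟩ F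

theorem ker_mulVecLin_smul {α R m n : Type*} [DivisionRing α] [CommSemiring R]
    [Module α R] [IsScalarTower α R R] [Fintype n] {c : α} (hc : c ≠ 0) (S : Matrix m n R) :
    LinearMap.ker (c • S).mulVecLin = LinearMap.ker S.mulVecLin := by
  ext x
  simp only [LinearMap.mem_ker, mulVecLin_apply, smul_mulVec, smul_eq_zero_iff_right hc]

theorem posDef_add_of_disjoint_ker {𝕜 n : Type*} [RCLike 𝕜] [Fintype n]
    {S T : Matrix n n 𝕜} (hS : S.PosSemidef) (hT : T.PosSemidef)
    (h : Disjoint (LinearMap.ker S.mulVecLin) (LinearMap.ker T.mulVecLin)) : (S + T).PosDef := by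
  refine .of_dotProduct_mulVec_pos (hS.add hT).isHermitian fun x hx => ?_
  have hSx := hS.dotProduct_mulVec_nonneg x
  have hTx := hT.dotProduct_mulVec_nonneg x
  rw [add_mulVec, dotProduct_add]
  refine (add_nonneg hSx hTx).lt_of_ne' fun hsum => hx ?_
  obtain ⟨hSx0, hTx0⟩ := (add_eq_zero_iff_of_nonneg hSx hTx).1 hsum
  exact Submodule.disjoint_def.1 h x ((hS.dotProduct_mulVec_zero_iff x).1 hSx0)
    ((hT.dotProduct_mulVec_zero_iff x).1 hTx0)

section RankOneCorrection

variable {𝕜 n : Type*} [RCLike 𝕜] [Fintype n]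

/-- The rank-one matrix `(eᴴ M e)⁻¹ (M e)(M e)ᴴ`, which corrects a positive semidefinite matrix
with kernel spanned by `e` to a positive definite one. It extends `Qblk`, the case of the real
all-ones vector `e`, and has the junk value `0` when `eᴴ M e = 0`. -/
noncomputable def rankOneCorrection (M : Matrix n n 𝕜) (e : n → 𝕜) : Matrix n n 𝕜 :=
  (star e ⬝ᵥ M *ᵥ e)⁻¹ • vecMulVec (M *ᵥ e) (star (M *ᵥ e))

variable {M : Matrix n n 𝕜} {e : n → 𝕜}

theorem posSemidef_rankOneCorrection (h : 0 ≤ star e ⬝ᵥ M *ᵥ e) :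
    (rankOneCorrection M e).PosSemidef :=
  (posSemidef_vecMulVec_self_star (M *ᵥ e)).smul (inv_nonneg.2 h)

theorem rankOneCorrection_mulVec_self (h : 0 < star e ⬝ᵥ M *ᵥ e) :
    rankOneCorrection M e *ᵥ e = M *ᵥ e := by
  have hself : star (M *ᵥ e) ⬝ᵥ e = star e ⬝ᵥ M *ᵥ e := by
    rw [star_dotProduct, dotProduct_comm, dotProduct_comm, (IsSelfAdjoint.of_nonneg h.le).star_eq]
  rw [rankOneCorrection, smul_mulVec, vecMulVec_mulVec, hself, op_smul_eq_smul,
    inv_smul_smul₀ h.ne']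

theorem disjoint_span_ker_rankOneCorrection (h : 0 < star e ⬝ᵥ M *ᵥ e) :
    Disjoint (Submodule.span 𝕜 {e}) (LinearMap.ker (rankOneCorrection M e).mulVecLin) := by
  refine (Submodule.disjoint_span_singleton_of_notMem fun he => h.ne' ?_).symm
  rw [LinearMap.mem_ker, mulVecLin_apply, rankOneCorrection_mulVec_self h] at he
  rw [he, dotProduct_zero]

theorem posDef_add_rankOneCorrection {S : Matrix n n 𝕜} (hS : S.PosSemidef)
    (hker : LinearMap.ker S.mulVecLin ≤ Submodule.span 𝕜 {e}) (h : 0 < star e ⬝ᵥ M *ᵥ e) :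
    (S + rankOneCorrection M e).PosDef :=
  posDef_add_of_disjoint_ker hS (posSemidef_rankOneCorrection h.le)
    ((disjoint_span_ker_rankOneCorrection h).mono_left hker)

end RankOneCorrection

theorem Qblk_eq_rankOneCorrection {k : ℕ} (M : Matrix (Fin k) (Fin k) ℝ) :
    Qblk M = rankOneCorrection M (onesV k) := by
  simp only [Qblk, rankOneCorrection, star_trivial]

theorem dotProduct_onesV_mulVec_pos {k : ℕ} (hk : 0 < k) {M : Matrix (Fin k) (Fin k) ℝ}
    (hM : M.PosDef) : 0 < star (onesV k) ⬝ᵥ M *ᵥ onesV k :=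
  hM.dotProduct_mulVec_pos fun h => one_ne_zero (congrFun h ⟨0, hk⟩)

section BlockSaddlePoint

variable {𝕜 ι k : Type*} {n : ι → Type*} [RCLike 𝕜] [Fintype ι] [DecidableEq ι]
  [∀ s, Fintype (n s)] [∀ s, DecidableEq (n s)] [Fintype k] [DecidableEq k]

theorem posDef_blockDiagonal'_add_rankOneCorrection {M S : ∀ s, Matrix (n s) (n s) 𝕜}
    {e : ∀ s, n s → 𝕜} {ε : ι → ℝ} (hS : ∀ s, (S s).PosSemidef)
    (hker : ∀ s, LinearMap.ker (S s).mulVecLin ≤ Submodule.span 𝕜 {e s})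
    (hM : ∀ s, 0 < star (e s) ⬝ᵥ M s *ᵥ e s) (hε : ∀ s, 0 < ε s) :
    ((blockDiagonal' fun s => ε s • (1 : Matrix (n s) (n s) 𝕜)) * blockDiagonal' S +
      blockDiagonal' fun s => rankOneCorrection (M s) (e s)).PosDef := by
  rw [← blockDiagonal'_mul, ← blockDiagonal'_add]
  refine posDef_blockDiagonal' fun s => ?_
  rw [Pi.add_apply, smul_one_mul]
  exact posDef_add_rankOneCorrection ((hS s).smul (hε s).le)
    ((ker_mulVecLin_smul (hε s).ne' (S s)).trans_le (hker s)) (hM s)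

theorem stmt11_general {M Bb : ∀ s, Matrix (n s) (n s) 𝕜} {e : ∀ s, n s → 𝕜} {ε : ι → ℝ}
    (hM : ∀ s, 0 < star (e s) ⬝ᵥ M s *ᵥ e s) (hBb : ∀ s, (Bb s).PosSemidef)
    (hker : ∀ s, LinearMap.ker (Bb s).mulVecLin ≤ Submodule.span 𝕜 {e s})
    (hε : ∀ s, 0 < ε s) {A : Matrix k k 𝕜} (hA : A.PosDef) (B : Matrix (Σ s, n s) k 𝕜)
    {S Q : Matrix (Σ s, n s) (Σ s, n s) 𝕜}
    (hS : S = (blockDiagonal' fun s => ε s • (1 : Matrix (n s) (n s) 𝕜)) * blockDiagonal' Bb)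
    (hQ : Q = blockDiagonal' fun s => rankOneCorrection (M s) (e s)) :
    (S + Q).PosDef ∧ IsUnit (fromBlocks A Bᴴ B (-S - Q)).det ∧
      ∀ F, ∃! z, fromBlocks A Bᴴ B (-S - Q) *ᵥ z = F := by
  have hSQ : (S + Q).PosDef := by
    rw [hS, hQ]
    exact posDef_blockDiagonal'_add_rankOneCorrection hBb hker hM hε
  have hunit : IsUnit (fromBlocks A Bᴴ B (-S - Q)) := by
    rw [← neg_add']
    exact isUnit_fromBlocks_neg_of_posDef hA hSQ B
  exact ⟨hSQ, (isUnit_iff_isUnit_det _).1 hunit, existsUnique_mulVec_eq_of_isUnit hunit⟩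

end BlockSaddlePoint

/-- `Σ_ε B_D + Q` is symmetric positive definite and the saddle point matrix
`A_ε = [[A, Bᵀ],[B, −Σ_ε B_D − Q]]` is nonsingular; in particular `A_ε z = F` is uniquely
solvable for every right-hand side `F`. -/
theorem stmt11
    (m : ℕ) (hm : 1 ≤ m) (ns : Fin m → ℕ) (hns : ∀ s, 0 < ns s)
    (M Bb : ∀ s : Fin m, Matrix (Fin (ns s)) (Fin (ns s)) ℝ)
    (hM : ∀ s, (M s).PosDef) (hBb : ∀ s, (Bb s).PosSemidef)
    (hker : ∀ s, LinearMap.ker (Bb s).mulVecLin = Submodule.span ℝ {onesV (ns s)})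
    (n0 : ℕ) (hn0 : 1 ≤ n0)
    (A : Matrix ((Σ s, Fin (ns s)) ⊕ Fin n0) ((Σ s, Fin (ns s)) ⊕ Fin n0) ℝ)
    (hA : A.PosDef)
    (BD Q : Matrix (Σ s, Fin (ns s)) (Σ s, Fin (ns s)) ℝ)
    (hBD : BD = blockDiagonal' Bb)
    (hQ : Q = blockDiagonal' fun s => Qblk (M s))
    (B : Matrix (Σ s, Fin (ns s)) ((Σ s, Fin (ns s)) ⊕ Fin n0) ℝ)
    (hB : B = fromCols BD 0)
    (ε : Fin m → ℝ) (hε : ∀ s, 0 < ε s)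
    (Sig : Matrix (Σ s, Fin (ns s)) (Σ s, Fin (ns s)) ℝ)
    (hSig : Sig = blockDiagonal' fun s => ε s • (1 : Matrix (Fin (ns s)) (Fin (ns s)) ℝ))
    (Aε : Matrix (((Σ s, Fin (ns s)) ⊕ Fin n0) ⊕ (Σ s, Fin (ns s)))
          (((Σ s, Fin (ns s)) ⊕ Fin n0) ⊕ (Σ s, Fin (ns s))) ℝ)
    (hAε : Aε = fromBlocks A Bᵀ B (-(Sig * BD) - Q)) :
    (Sig * BD + Q).PosDef ∧
    IsUnit Aε.det ∧
    ∀ F : (((Σ s, Fin (ns s)) ⊕ Fin n0) ⊕ (Σ s, Fin (ns s))) → ℝ,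
      ∃! z, Aε.mulVec z = F := by
  subst hBD hSig hAε
  exact stmt11_general (fun s => dotProduct_onesV_mulVec_pos (hns s) (hM s)) hBb
    (fun s => (hker s).le) hε hA B rfl (by simpa only [Qblk_eq_rankOneCorrection] using hQ)
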